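/- arXiv:2412.18959 — 2 statements merged into one kernel-verified Lean document; each statement's English description precedes it below -/
import Mathlib

section
/- If (B' | A') and (B'' | A'') are irreducible skew-symmetric augmented matrices that are S-equivalent, then there exists a permutation matrix P such that P B' Pᵀ = B'' and P A' = A''; in particular they have the same dimension. -/
/-- A skew-symmetric augmented matrix `(B ∣ A)` of dimension `n`:
`B` is an `n × n` integer matrix with `Bᵀ = -B` and `A` is an integer
column vector of length `n`.  Dimension `0` gives the empty matrix. -/
structure SkewAug where
  n : ℕ
  B : Matrix (Fin n) (Fin n) ℤ
  A : Fin n → ℤ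
  skew : B.transpose = -B

namespace SkewAug

/-- The permutation matrix of a permutation `σ` of `Fin n`. -/
def permMatrixOf {n : ℕ} (σ : Equiv.Perm (Fin n)) : Matrix (Fin n) (Fin n) ℤ :=
  Matrix.of fun i j => if σ j = i then 1 else 0

/-- `P` is a permutation matrix. -/
def IsPermMatrix {n : ℕ} (P : Matrix (Fin n) (Fin n) ℤ) : Prop :=
  ∃ σ : Equiv.Perm (Fin n), P = permMatrixOf σ

/-- `PermStep M N` : `N` is a permutation of `M`, i.e. there is a permutation
matrix `P` with `N = (P M.B Pᵀ ∣ P M.A)`. -/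
def PermStep (M N : SkewAug) : Prop :=
  ∃ (h : M.n = N.n) (P : Matrix (Fin N.n) (Fin N.n) ℤ),
    IsPermMatrix P ∧
    N.B = P * (Matrix.reindex (finCongr h) (finCongr h) M.B) * P.transpose ∧
    N.A = P.mulVec (fun i => M.A (Fin.cast h.symm i))

/-- `DeleteAt M S N` : `N` is obtained from `M` by deleting the rows and
columns of `M.B` indexed by `S` and the entries of `M.A` indexed by `S`. -/
def DeleteAt (M : SkewAug) (S : Set (Fin M.n)) (N : SkewAug) : Prop :=
  ∃ e : Fin N.n → Fin M.n, StrictMono e ∧ (∀ k, k ∈ Set.range e ↔ k ∉ S) ∧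
    (∀ i j, N.B i j = M.B (e i) (e j)) ∧ (∀ i, N.A i = M.A (e i))

/-- The condition allowing a reduction of type 1 at index `j`:
`A j = 0` and the `j`-th column of `B` is the zero vector or equals `A`. -/
def Red1Cond (M : SkewAug) (j : Fin M.n) : Prop :=
  M.A j = 0 ∧ ((∀ i, M.B i j = 0) ∨ (∀ i, M.B i j = M.A i))

/-- The condition allowing a reduction of type 2 at distinct indices `r, t`:
`A r = -A t` and the sum of the `r`-th and `t`-th columns of `B` equals `A`. -/
def Red2Cond (M : SkewAug) (r t : Fin M.n) : Prop :=
  r ≠ t ∧ M.A r = -M.A t ∧ ∀ i, M.B i r + M.B i t = M.A i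

/-- `N` is obtained from `M` by a reduction of type 1. -/
def Red1 (M N : SkewAug) : Prop :=
  ∃ j : Fin M.n, Red1Cond M j ∧ DeleteAt M {j} N

/-- `N` is obtained from `M` by a reduction of type 2. -/
def Red2 (M N : SkewAug) : Prop :=
  ∃ r t : Fin M.n, Red2Cond M r t ∧ DeleteAt M {r, t} N

/-- A single move: a permutation, a reduction of type 1 or 2, or an
extension of type 1 or 2 (the inverse of a reduction). -/
def Move (M N : SkewAug) : Prop :=
  PermStep M N ∨ Red1 M N ∨ Red2 M N ∨ Red1 N M ∨ Red2 N M

/-- S-equivalence: `M` can be transformed into `N` by a finite sequence of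
moves. -/
def SEquiv : SkewAug → SkewAug → Prop :=
  Relation.ReflTransGen Move

/-- A reduction of type 1 or type 2 can be applied to `M`. -/
def Reducible (M : SkewAug) : Prop :=
  (∃ j, Red1Cond M j) ∨ (∃ r t, Red2Cond M r t)

/-- `M` is irreducible: no reduction of type 1 or type 2 can be applied. -/
def Irreducible (M : SkewAug) : Prop := ¬ Reducible M

/-- The empty skew-symmetric augmented matrix. -/
def empty : SkewAug := ⟨0, 0, 0, by simp⟩

/-- `M` is trivial if it is S-equivalent to the empty matrix. -/
def Trivial (M : SkewAug) : Prop := SEquiv M empty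

end SkewAug

namespace SkewAug

lemma skw (M : SkewAug) (i j : Fin M.n) : M.B i j = - M.B j i := by
  have := congrFun (congrFun M.skew j) i
  simpa [Matrix.transpose_apply] using this

/-- `S` is empty or the index set of a reduction. -/
def Good (M : SkewAug) (S : Set (Fin M.n)) : Prop :=
  S = ∅ ∨ (∃ j, S = {j} ∧ Red1Cond M j) ∨ (∃ r t, S = {r, t} ∧ Red2Cond M r t)

/-- `e` is an embedding of `N` as a submatrix of `M`. -/
def Emb (M N : SkewAug) (e : Fin N.n → Fin M.n) : Prop :=
  Function.Injective e ∧ (∀ i j, N.B i j = M.B (e i) (e j)) ∧ (∀ i, N.A i = M.A (e i))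

/-- Isomorphism or reduction up to isomorphism. -/
def Tr (M N : SkewAug) : Prop :=
  ∃ e : Fin N.n → Fin M.n, Emb M N e ∧
    ∃ S, Good M S ∧ ∀ k, k ∈ Set.range e ↔ k ∉ S

lemma Emb.lift {M N P : SkewAug} {e : Fin N.n → Fin M.n} {f : Fin P.n → Fin M.n}
    (he : Emb M N e) (hf : Emb M P f) (h : ∀ i, f i ∈ Set.range e) :
    ∃ g : Fin P.n → Fin N.n, Emb N P g ∧ ∀ i, e (g i) = f i := by
  choose g hg using h
  refine ⟨g, ⟨fun a b hab => hf.1 ?_, fun i j => ?_, fun i => ?_⟩, hg⟩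
  · rw [← hg, ← hg, hab]
  · rw [he.2.1, hg, hg, hf.2.1]
  · rw [he.2.2, hg, hf.2.2]

lemma Emb.red1 {M N : SkewAug} {e : Fin N.n → Fin M.n} (he : Emb M N e) {j : Fin N.n}
    (h : Red1Cond M (e j)) : Red1Cond N j := by
  refine ⟨by rw [he.2.2]; exact h.1, h.2.imp (fun h i => ?_) (fun h i => ?_)⟩
  · rw [he.2.1, h]
  · rw [he.2.1, he.2.2, h]

lemma Emb.red2 {M N : SkewAug} {e : Fin N.n → Fin M.n} (he : Emb M N e) {r t : Fin N.n}
    (h : Red2Cond M (e r) (e t)) : Red2Cond N r t := by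
  refine ⟨fun h' => h.1 (by rw [h']), ?_, fun i => ?_⟩
  · rw [he.2.2, he.2.2, h.2.1]
  · rw [he.2.1, he.2.1, he.2.2, h.2.2]

lemma Emb.good {M N : SkewAug} {e : Fin N.n → Fin M.n} (he : Emb M N e) {S : Set (Fin M.n)}
    (h : Good M S) (hS : ∀ k ∈ S, k ∈ Set.range e) : Good N (e ⁻¹' S) := by
  rcases h with rfl | ⟨j, rfl, hj⟩ | ⟨r, t, rfl, h⟩
  · left; simp
  · obtain ⟨j, rfl⟩ := hS j (by simp)
    right; left
    exact ⟨j, by ext x; simp [he.1.eq_iff], he.red1 hj⟩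
  · obtain ⟨r, rfl⟩ := hS r (by simp)
    obtain ⟨t, rfl⟩ := hS t (by simp)
    right; right
    exact ⟨r, t, by ext x; simp [he.1.eq_iff], he.red2 h⟩

lemma exists_sub (M : SkewAug) (S : Set (Fin M.n)) :
    ∃ (P : SkewAug) (f : Fin P.n → Fin M.n), Emb M P f ∧ ∀ k, k ∈ Set.range f ↔ k ∉ S := by
  classical
  let K : Finset (Fin M.n) := Finset.univ.filter (· ∉ S)
  let f : Fin K.card → Fin M.n := fun i => (K.equivFin.symm i : Fin M.n)
  refine ⟨⟨K.card, fun i j => M.B (f i) (f j), fun i => M.A (f i), ?_⟩, f, ⟨?_, ?_, ?_⟩, ?_⟩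
  · ext i j
    exact skw M _ _
  · intro a b hab
    exact K.equivFin.symm.injective (Subtype.ext hab)
  · intro i j; rfl
  · intro i; rfl
  · intro k
    constructor
    · rintro ⟨i, rfl⟩
      have := (K.equivFin.symm i).2
      exact (Finset.mem_filter.1 this).2
    · intro hk
      have hk' : k ∈ K := Finset.mem_filter.2 ⟨Finset.mem_univ _, hk⟩
      exact ⟨K.equivFin ⟨k, hk'⟩, by simp [f]⟩

/-- Lifting a smaller submatrix through a bigger one. -/
lemma Emb.tr {M N P : SkewAug} {e : Fin N.n → Fin M.n} {f : Fin P.n → Fin M.n}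
    (he : Emb M N e) (hf : Emb M P f) {S S' : Set (Fin M.n)}
    (hS : ∀ k, k ∈ Set.range e ↔ k ∉ S) (hS' : ∀ k, k ∈ Set.range f ↔ k ∉ S')
    (hsub : S ⊆ S') {U : Set (Fin N.n)} (hU : Good N U) (hUS : ∀ x, x ∈ U ↔ e x ∈ S') :
    Tr N P := by
  obtain ⟨g, hg, hgf⟩ := he.lift hf (fun i => (hS _).2 fun h => (hS' _).1 ⟨i, rfl⟩ (hsub h))
  refine ⟨g, hg, U, hU, fun k => ?_⟩
  rw [hUS, ← hS']
  constructor
  · rintro ⟨i, rfl⟩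
    exact ⟨i, (hgf i).symm⟩
  · rintro ⟨i, hi⟩
    exact ⟨i, he.1 (by rw [hgf, hi])⟩

lemma Tr.refl (M : SkewAug) : Tr M M :=
  ⟨id, ⟨fun _ _ h => h, fun _ _ => rfl, fun _ => rfl⟩, ∅, Or.inl rfl, by simp⟩

lemma Red2Cond.symm {M : SkewAug} {r t : Fin M.n} (h : Red2Cond M r t) : Red2Cond M t r :=
  ⟨h.1.symm, by rw [h.2.1, neg_neg], fun i => by rw [add_comm, h.2.2]⟩

/-- nested case -/
lemma nested {M N P : SkewAug} {e : Fin N.n → Fin M.n} {f : Fin P.n → Fin M.n}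
    (he : Emb M N e) (hf : Emb M P f) {j t : Fin M.n}
    (hS : ∀ k, k ∈ Set.range e ↔ k ∉ ({j} : Set (Fin M.n)))
    (hS' : ∀ k, k ∈ Set.range f ↔ k ∉ ({j, t} : Set (Fin M.n)))
    (h1 : Red1Cond M j) (h2 : Red2Cond M j t) : Tr N P := by
  have ht : Red1Cond M t := by
    obtain ⟨a, b⟩ := h1
    obtain ⟨_, c, d⟩ := h2
    refine ⟨by omega, ?_⟩
    rcases b with b | b
    · right; intro i; have := d i; have := b i; omega
    · left; intro i; have := d i; have := b i; omega
  have htr : t ∈ Set.range e := (hS t).2 (fun h => h2.1 (by simpa using h.symm))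
  refine he.tr hf hS hS' (by intro x; simp; tauto) (U := e ⁻¹' {t}) ?_ ?_
  · exact he.good (Or.inr (Or.inl ⟨t, rfl, ht⟩)) (by simpa using htr)
  · intro x
    have : e x ∉ ({j} : Set (Fin M.n)) := (hS _).1 ⟨x, rfl⟩
    simp at this ⊢
    tauto

/-- overlapping type 2 case -/
lemma overlap {M N P : SkewAug} {e : Fin N.n → Fin M.n} {f : Fin P.n → Fin M.n}
    (he : Emb M N e) (hf : Emb M P f) {r t u : Fin M.n}
    (hS : ∀ k, k ∈ Set.range e ↔ k ∉ ({r, t} : Set (Fin M.n)))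
    (hS' : ∀ k, k ∈ Set.range f ↔ k ∉ ({r, u} : Set (Fin M.n)))
    (h1 : Red2Cond M r t) (h2 : Red2Cond M r u) : Tr N P := by
  have hc : ∀ i, M.B i t = M.B i u := fun i => by
    have := h1.2.2 i; have := h2.2.2 i; omega
  have hA : M.A t = M.A u := by
    have := h1.2.1; have := h2.2.1; omega
  have sA : ∀ x, M.A (Equiv.swap t u x) = M.A x := by
    intro x
    rw [Equiv.swap_apply_def]; split_ifs <;> simp_all
  have sB : ∀ i x, M.B i (Equiv.swap t u x) = M.B i x := by
    intro i x
    rw [Equiv.swap_apply_def]; split_ifs <;> simp_all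
  have sB' : ∀ x y, M.B (Equiv.swap t u x) (Equiv.swap t u y) = M.B x y := by
    intro x y
    rw [sB, skw, sB, ← skw]
  have hf' : Emb M P (fun i => Equiv.swap t u (f i)) :=
    ⟨(Equiv.swap t u).injective.comp hf.1, fun i j => by rw [sB', hf.2.1],
      fun i => by rw [sA, hf.2.2]⟩
  have hr : ∀ k, k ∈ Set.range (fun i => Equiv.swap t u (f i)) ↔
      k ∉ ({r, t} : Set (Fin M.n)) := by
    intro k
    have : k ∈ Set.range (fun i => Equiv.swap t u (f i)) ↔
        Equiv.swap t u k ∈ Set.range f := by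
      constructor
      · rintro ⟨i, rfl⟩; exact ⟨i, by simp⟩
      · rintro ⟨i, hi⟩; exact ⟨i, by simp [hi]⟩
    rw [this, hS']
    have a := h1.1
    have b := h2.1
    rw [Equiv.swap_apply_def]
    simp only [Set.mem_insert_iff, Set.mem_singleton_iff]
    split_ifs <;> grind
  exact he.tr hf' hS hr (le_refl _) (U := ∅) (Or.inl rfl)
    (fun x => by simpa using (hS (e x)).1 ⟨x, rfl⟩)

lemma diamond_disj {M N1 N2 : SkewAug} {e1 : Fin N1.n → Fin M.n} {e2 : Fin N2.n → Fin M.n}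
    (he1 : Emb M N1 e1) (he2 : Emb M N2 e2) {S1 S2 : Set (Fin M.n)}
    (h1 : ∀ k, k ∈ Set.range e1 ↔ k ∉ S1) (h2 : ∀ k, k ∈ Set.range e2 ↔ k ∉ S2)
    (g1 : Good M S1) (g2 : Good M S2) (hd : ∀ k, k ∈ S1 → k ∉ S2) :
    ∃ P, Tr N1 P ∧ Tr N2 P := by
  obtain ⟨P, f, hf, hr⟩ := exists_sub M (S1 ∪ S2)
  refine ⟨P, ?_, ?_⟩
  · refine he1.tr hf h1 hr Set.subset_union_left (U := e1 ⁻¹' S2)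
      (he1.good g2 fun k hk => (h1 k).2 fun h => hd k h hk) fun x => ?_
    have := (h1 _).1 ⟨x, rfl⟩
    simp [this]
  · refine he2.tr hf h2 hr Set.subset_union_right (U := e2 ⁻¹' S1)
      (he2.good g1 fun k hk => (h2 k).2 fun h => hd k hk h) fun x => ?_
    have := (h2 _).1 ⟨x, rfl⟩
    simp [this]

lemma good_cases {M : SkewAug} {S : Set (Fin M.n)} (h : Good M S) {k : Fin M.n} (hk : k ∈ S) :
    (S = {k} ∧ Red1Cond M k) ∨ ∃ t, S = {k, t} ∧ Red2Cond M k t := by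
  rcases h with rfl | ⟨j, rfl, h⟩ | ⟨r, t, rfl, h⟩
  · simp at hk
  · obtain rfl : k = j := by simpa using hk
    exact Or.inl ⟨rfl, h⟩
  · rcases (by simpa using hk : k = r ∨ k = t) with rfl | rfl
    · exact Or.inr ⟨t, rfl, h⟩
    · exact Or.inr ⟨r, Set.pair_comm _ _, h.symm⟩

lemma diamond {M N1 N2 : SkewAug} (h1 : Tr M N1) (h2 : Tr M N2) :
    ∃ P, Tr N1 P ∧ Tr N2 P := by
  obtain ⟨e1, he1, S1, g1, r1⟩ := h1
  obtain ⟨e2, he2, S2, g2, r2⟩ := h2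
  by_cases hd : ∀ k, k ∈ S1 → k ∉ S2
  · exact diamond_disj he1 he2 r1 r2 g1 g2 hd
  · push Not at hd
    obtain ⟨k, k1, k2⟩ := hd
    rcases good_cases g1 k1 with ⟨rfl, c1⟩ | ⟨t, rfl, c1⟩ <;>
      rcases good_cases g2 k2 with ⟨rfl, c2⟩ | ⟨u, rfl, c2⟩
    · exact ⟨N2, he1.tr he2 r1 r2 (le_refl _) (U := ∅) (Or.inl rfl)
        (fun x => by simpa using (r1 (e1 x)).1 ⟨x, rfl⟩), Tr.refl _⟩
    · exact ⟨N2, nested he1 he2 r1 r2 c1 c2, Tr.refl _⟩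
    · exact ⟨N1, Tr.refl _, nested he2 he1 r2 r1 c2 c1⟩
    · exact ⟨N2, overlap he1 he2 r1 r2 c1 c2, Tr.refl _⟩

/-- Isomorphism. -/
def Iso (M N : SkewAug) : Prop :=
  ∃ e : Fin N.n → Fin M.n, Emb M N e ∧ Function.Surjective e

lemma Iso.tr {M N : SkewAug} (h : Iso M N) : Tr M N := by
  obtain ⟨e, he, hs⟩ := h
  exact ⟨e, he, ∅, Or.inl rfl, fun k => by simpa using hs k⟩

lemma Iso.symm {M N : SkewAug} (h : Iso M N) : Iso N M := by
  obtain ⟨e, he, hs⟩ := h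
  choose g hg using hs
  refine ⟨g, ⟨fun a b hab => ?_, fun i j => ?_, fun i => ?_⟩, fun k => ⟨e k, he.1 (hg _)⟩⟩
  · rw [← hg a, hab, hg]
  · rw [he.2.1, hg, hg]
  · rw [he.2.2, hg]

lemma Iso.trans {M N P : SkewAug} (h : Iso M N) (h' : Iso N P) : Iso M P := by
  obtain ⟨e, he, hs⟩ := h
  obtain ⟨f, hf, hs'⟩ := h'
  exact ⟨e ∘ f, ⟨he.1.comp hf.1, fun i j => by rw [hf.2.1, he.2.1]; rfl,
    fun i => by rw [hf.2.2, he.2.2]; rfl⟩, hs.comp hs'⟩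

lemma Iso.irr {M N : SkewAug} (h : Iso M N) (hM : Irreducible M) : Irreducible N := by
  obtain ⟨e, he, -⟩ := h.symm
  have := h
  rintro (⟨j, hj⟩ | ⟨r, t, hj⟩)
  · obtain ⟨k, rfl⟩ : ∃ k, e k = j := by
      obtain ⟨e', he', hs⟩ := h
      have : Function.Bijective e := by
        have hc : M.n = N.n := by
          simpa using (Fintype.card_of_bijective ⟨he'.1, hs⟩).symm
        exact (Fintype.bijective_iff_injective_and_card e).2 ⟨he.1, by simpa using hc⟩
      exact this.2 j
    exact hM (Or.inl ⟨k, he.red1 hj⟩)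
  · have hsur : Function.Surjective e := by
      obtain ⟨e', he', hs⟩ := h
      have hc : M.n = N.n := by
        simpa using (Fintype.card_of_bijective ⟨he'.1, hs⟩).symm
      exact ((Fintype.bijective_iff_injective_and_card e).2 ⟨he.1, by simpa using hc⟩).2
    obtain ⟨r, rfl⟩ := hsur r
    obtain ⟨t, rfl⟩ := hsur t
    exact hM (Or.inr ⟨r, t, he.red2 hj⟩)

lemma Tr.iso {M N : SkewAug} (h : Tr M N) (hM : Irreducible M) : Iso M N := by
  obtain ⟨e, he, S, rfl | ⟨j, -, hj⟩ | ⟨r, t, -, hj⟩, hr⟩ := h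
  · exact ⟨e, he, fun k => by simpa using hr k⟩
  · exact (hM (Or.inl ⟨j, hj⟩)).elim
  · exact (hM (Or.inr ⟨r, t, hj⟩)).elim

lemma iso_of_star {M N : SkewAug} (h : Relation.ReflTransGen Tr M N) (hM : Irreducible M) :
    Iso M N := by
  induction h with
  | refl => exact (Tr.refl M).iso hM
  | tail _ h ih => exact ih.trans (h.iso (ih.irr hM))

lemma perm_B {n : ℕ} (σ : Equiv.Perm (Fin n)) (B : Matrix (Fin n) (Fin n) ℤ) (i j : Fin n) :
    (permMatrixOf σ * B * (permMatrixOf σ).transpose) i j = B (σ.symm i) (σ.symm j) := by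
  simp [permMatrixOf, Matrix.mul_apply, ← Equiv.eq_symm_apply]

lemma perm_A {n : ℕ} (σ : Equiv.Perm (Fin n)) (A : Fin n → ℤ) (i : Fin n) :
    (permMatrixOf σ).mulVec A i = A (σ.symm i) := by
  simp [permMatrixOf, Matrix.mulVec, dotProduct, ← Equiv.eq_symm_apply]

lemma PermStep.iso {M N : SkewAug} (h : PermStep M N) : Iso M N := by
  obtain ⟨n, B, A, hs⟩ := M
  obtain ⟨m, B', A', hs'⟩ := N
  obtain ⟨h, P, ⟨σ, rfl⟩, hB, hA⟩ := h
  dsimp only at h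
  subst h
  dsimp only at hB hA
  refine ⟨σ.symm, ⟨σ.symm.injective, fun i j => ?_, fun i => ?_⟩, σ.symm.surjective⟩
  · exact (congrFun (congrFun hB i) j).trans (perm_B (n := n) σ _ i j)
  · exact (congrFun hA i).trans (perm_A (n := n) σ _ i)

lemma Iso.permStep {M N : SkewAug} (h : Iso M N) : PermStep M N := by
  obtain ⟨n, B, A, hs⟩ := M
  obtain ⟨m, B', A', hs'⟩ := N
  obtain ⟨e, he, hsur⟩ := h
  have hnm : n = m := by
    simpa using (Fintype.card_of_bijective ⟨he.1, hsur⟩).symm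
  subst hnm
  let σ : Equiv.Perm (Fin n) := Equiv.ofBijective e ⟨he.1, hsur⟩
  refine ⟨rfl, permMatrixOf σ.symm, ⟨_, rfl⟩, ?_, ?_⟩
  · ext i j
    exact (he.2.1 i j).trans (perm_B σ.symm B i j).symm
  · ext i
    exact (he.2.2 i).trans (perm_A σ.symm A i).symm

lemma DeleteAt.tr {M N : SkewAug} {S : Set (Fin M.n)} (h : DeleteAt M S N) (g : Good M S) :
    Tr M N := by
  obtain ⟨e, hm, hr, hB, hA⟩ := h
  exact ⟨e, ⟨hm.injective, hB, hA⟩, S, g, hr⟩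

lemma Red1.tr {M N : SkewAug} (h : Red1 M N) : Tr M N := by
  obtain ⟨j, c, d⟩ := h
  exact d.tr (Or.inr (Or.inl ⟨j, rfl, c⟩))

lemma Red2.tr {M N : SkewAug} (h : Red2 M N) : Tr M N := by
  obtain ⟨r, t, c, d⟩ := h
  exact d.tr (Or.inr (Or.inr ⟨r, t, rfl, c⟩))

lemma Move.tr {M N : SkewAug} (h : Move M N) : Tr M N ∨ Tr N M := by
  rcases h with h | h | h | h | h
  · exact Or.inl h.iso.tr
  · exact Or.inl h.tr
  · exact Or.inl h.tr
  · exact Or.inr h.tr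
  · exact Or.inr h.tr

lemma SEquiv.join {M N : SkewAug} (h : SEquiv M N) :
    Relation.Join (Relation.ReflTransGen Tr) M N := by
  have eqv : Equivalence (Relation.Join (Relation.ReflTransGen Tr)) :=
    Relation.equivalence_join_reflTransGen fun a b c hab hac => by
      obtain ⟨d, h1, h2⟩ := diamond hab hac
      exact ⟨d, .single h1, .single h2⟩
  unfold SEquiv at h
  induction h with
  | refl => exact eqv.refl _
  | tail _ h ih =>
    refine eqv.trans ih ?_
    rcases h.tr with h | h
    · exact ⟨_, .single h, .refl⟩
    · exact ⟨_, .refl, .single h⟩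

end SkewAug

/-- Two irreducible skew-symmetric augmented matrices that are
S-equivalent differ by a permutation matrix; in particular they have the same
dimension. -/
theorem irreducible_sEquiv_iff_permStep (M N : SkewAug)
    (hM : SkewAug.Irreducible M) (hN : SkewAug.Irreducible N)
    (h : SkewAug.SEquiv M N) :
    SkewAug.PermStep M N ∧ M.n = N.n := by
  obtain ⟨P, h1, h2⟩ := h.join
  have hp := ((SkewAug.iso_of_star h1 hM).trans (SkewAug.iso_of_star h2 hN).symm).permStep
  exact ⟨hp, hp.1⟩
end

section
/- For every natural number k ≥ 0, the skew-symmetric augmented matrix (B | A) of dimension 2k+1 over the integers defined in block form by B = [[0_{k×k}, -2·J_{k×k}, -1_{k×1}], [2·J_{k×k}, 0_{k×k}, 1_{k×1}], [1_{1×k}, -1_{1×k}, 0]] (where J denotes the all-ones matrix, 1 the all-ones vector, and 0 the zero block) and A = (-2, ..., -2, 2, ..., 2, 0)ᵀ (with k entries equal to -2 followed by k entries equal to 2 and a final 0) is trivial, i.e., S-equivalent to the empty matrix. -/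
/-- The block matrix
`[[0, -2·J, -1], [2·J, 0, 1], [1, -1, 0]]` of dimension `2k + 1`, where `J`
is the `k × k` all-ones matrix and `1` the all-ones vector. -/
def blockB (k : ℕ) : Matrix (Fin (2 * k + 1)) (Fin (2 * k + 1)) ℤ :=
  Matrix.of fun i j =>
    if i.val < k then
      (if j.val < k then 0 else if j.val < 2 * k then -2 else -1)
    else if i.val < 2 * k then
      (if j.val < k then 2 else if j.val < 2 * k then 0 else 1)
    else
      (if j.val < k then 1 else if j.val < 2 * k then -1 else 0)

/-- The column vector `(-2, …, -2, 2, …, 2, 0)ᵀ` with `k` entries `-2`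
followed by `k` entries `2` and a final `0`. -/
def blockA (k : ℕ) : Fin (2 * k + 1) → ℤ :=
  fun i => if i.val < k then -2 else if i.val < 2 * k then 2 else 0

/-- The skew-symmetric augmented matrix `(blockB k ∣ blockA k)`. -/
def blockSkewAug (k : ℕ) : SkewAug :=
  ⟨2 * k + 1, blockB k, blockA k, by
    ext i j
    simp only [blockB, Matrix.transpose_apply, Matrix.neg_apply, Matrix.of_apply]
    split_ifs <;> omega⟩

theorem blockSkewAug_step (k : ℕ) :
    SkewAug.Red2 (blockSkewAug (k + 1)) (blockSkewAug k) := by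
  refine ⟨(⟨0, by omega⟩ : Fin (2 * (k + 1) + 1)), (⟨k + 1, by omega⟩ : Fin (2 * (k + 1) + 1)),
    ⟨?_, ?_, ?_⟩, ?_⟩
  · intro h
    have := congrArg Fin.val h
    simp at this
  · simp only [blockSkewAug, blockA]
    split_ifs <;> omega
  · intro (i : Fin (2 * (k + 1) + 1))
    simp only [blockSkewAug, blockA, blockB, Matrix.of_apply]
    split_ifs <;> omega
  · refine ⟨fun (i : Fin (2 * k + 1)) =>
      (⟨if i.val < k then i.val + 1 else i.val + 2, by split_ifs <;> omega⟩ :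
        Fin (2 * (k + 1) + 1)), ?_, ?_, ?_, ?_⟩
    · intro (a : Fin (2 * k + 1)) (b : Fin (2 * k + 1)) hab
      have hab' : a.val < b.val := hab
      show (if a.val < k then a.val + 1 else a.val + 2) <
        (if b.val < k then b.val + 1 else b.val + 2)
      split_ifs <;> omega
    · intro (j : Fin (2 * (k + 1) + 1))
      have hj := j.isLt
      constructor
      · rintro ⟨i, hi⟩ hS
        have hi' := congrArg Fin.val hi
        rcases hS with h | h
        · have h' := congrArg Fin.val h
          dsimp only at hi' h'
          split_ifs at hi' <;> omega
        · have h' := congrArg Fin.val h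
          dsimp only at hi' h'
          split_ifs at hi' <;> omega
      · intro hS
        have h0 : j.val ≠ 0 := fun h => hS (Or.inl (Fin.ext h))
        have h1 : j.val ≠ k + 1 := fun h => hS (Or.inr (Fin.ext h))
        by_cases hk : j.val < k + 1
        · refine ⟨(⟨j.val - 1, by omega⟩ : Fin (2 * k + 1)), Fin.ext ?_⟩
          dsimp only
          split_ifs <;> omega
        · refine ⟨(⟨j.val - 2, by omega⟩ : Fin (2 * k + 1)), Fin.ext ?_⟩
          dsimp only
          split_ifs <;> omega
    · intro (i : Fin (2 * k + 1)) (j : Fin (2 * k + 1))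
      simp only [blockSkewAug, blockB, Matrix.of_apply]
      by_cases h1 : i.val < k <;> by_cases h2 : j.val < k <;>
        simp only [h1, h2, if_true, if_false] <;> split_ifs <;> omega
    · intro (i : Fin (2 * k + 1))
      simp only [blockSkewAug, blockA]
      by_cases h1 : i.val < k <;>
        simp only [h1, if_true, if_false] <;> split_ifs <;> omega

theorem blockSkewAug_base : SkewAug.Red1 (blockSkewAug 0) SkewAug.empty := by
  refine ⟨(0 : Fin 1), ⟨?_, Or.inl ?_⟩, ?_⟩
  · simp [blockSkewAug, blockA]
  · intro (i : Fin 1)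
    simp [blockSkewAug, blockB]
  · refine ⟨fun (i : Fin 0) => i.elim0, fun (i : Fin 0) => i.elim0, ?_,
      fun (i : Fin 0) => i.elim0, fun (i : Fin 0) => i.elim0⟩
    intro (j : Fin 1)
    constructor
    · rintro ⟨i, _⟩
      exact Fin.elim0 (i : Fin 0)
    · intro h
      exact absurd (Subsingleton.elim (α := Fin 1) j 0) h

/-- For every `k ≥ 0`, the skew-symmetric augmented matrix
`(blockB k ∣ blockA k)` of dimension `2k + 1` is trivial, i.e. S-equivalent
to the empty matrix. -/
theorem blockSkewAug_trivial (k : ℕ) : SkewAug.Trivial (blockSkewAug k) := by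
  induction k with
  | zero => exact Relation.ReflTransGen.single (Or.inr (Or.inl blockSkewAug_base))
  | succ k ih =>
    exact Relation.ReflTransGen.head (Or.inr (Or.inr (Or.inl (blockSkewAug_step k)))) ih
end
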